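/- Let q be a prime power, r ≥ 1, n ≥ 1, and set s = n·(q^r - 1)/(q - 1). Let N be an r×s matrix over 𝔽_q such that for every 1-dimensional linear subspace L of (𝔽_q)^r, exactly n columns of N are nonzero vectors lying in L (i.e., N consists of n representatives of each point of the projective space P^(r-1)(𝔽_q)). Then for every 0 ≤ k ≤ r with s ≥ r-k ≥ 1 and every r×s matrix M over 𝔽_q of rank r, the k-dependence of M is at least the k-dependence of N. -/

import Mathlib

open Classical in
/-- The `k`-dependence of an `r × s` matrix over a field `F`, where `m = r - k`:
the proportion of `m`-element subsets of the columns that are linearly dependent. -/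
noncomputable def matKDep {F : Type} [Field F] {r s : ℕ}
    (M : Matrix (Fin r) (Fin s) F) (m : ℕ) : ℚ :=
  ((((Finset.univ : Finset (Fin s)).powersetCard m).filter
      (fun S => ¬ LinearIndependent F (fun i : {x : Fin s // x ∈ S} => M.transpose i.1))).card : ℚ)
    / (s.choose m)

/-!
The `m`-subsets of the columns that are linearly independent are counted through the ordered
linearly independent `m`-tuples. Once the first vector of a tuple is fixed, the remaining ones are
the independent `(m - 1)`-tuples of the images of the columns in the quotient by its span, which
kills exactly the columns on the same projective point. If `w i` is the number of columns on the
point of column `i`, then the reciprocals `1 / w i` sum to the number of points occurring among the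
columns, hence to at most the number `P` of all points. The inductive bound is a multiple of
`∑ i, (t - w i) ^ (m - 1)`, where `t` is the number of nonzero columns, and comparing
`x * (1 - x) ^ (m - 1)` with its tangent line at `x = 1 / P` shows that, under this constraint, the
sum is largest when all points have the same multiplicity. For equal multiplicities the bound is
attained.
-/

open Finset Module Submodule

section ScalarInequality

variable {K : Type*} [Field K] [LinearOrder K] [IsStrictOrderedRing K]

/- The right-hand side is the tangent line of the left-hand side at `x = a`. In the inductive step
both sides are multiplied by `1 - x`; the resulting defect is a multiple of `(x - a) ^ 2`. -/
theorem mul_one_sub_pow_succ_le_tangent {a x : K} (ha : 0 ≤ a) (hx : x ≤ 1) {m : ℕ}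
    (ham : (m + 2) * a ≤ 1) :
    x * (1 - x) ^ (m + 1) ≤ (1 - a) ^ m * ((1 - (m + 2) * a) * x + (m + 1) * a ^ 2) := by
  induction m with
  | zero => norm_num; linarith [sq_nonneg (x - a)]
  | succ m ih =>
    push_cast at ham ⊢
    have ham' : (m + 2) * a ≤ 1 := by linarith
    have ha1 : 0 ≤ 1 - a := by nlinarith [mul_nonneg (Nat.cast_nonneg (α := K) m) ha]
    have hdefect : 0 ≤ (1 - (m + 2) * a) * (x - a) ^ 2 :=
      mul_nonneg (sub_nonneg.2 ham') (sq_nonneg _)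
    calc x * (1 - x) ^ (m + 1 + 1)
        = x * (1 - x) ^ (m + 1) * (1 - x) := by ring
      _ ≤ (1 - a) ^ m * ((1 - (m + 2) * a) * x + (m + 1) * a ^ 2) * (1 - x) :=
          mul_le_mul_of_nonneg_right (ih ham') (sub_nonneg.2 hx)
      _ = (1 - a) ^ m * (((1 - (m + 2) * a) * x + (m + 1) * a ^ 2) * (1 - x)) := mul_assoc ..
      _ ≤ (1 - a) ^ m * ((1 - a) * ((1 - (m + 1 + 2) * a) * x + (m + 1 + 1) * a ^ 2)) :=
          mul_le_mul_of_nonneg_left (by linarith) (pow_nonneg ha1 m)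
      _ = (1 - a) ^ (m + 1) * ((1 - (m + 1 + 2) * a) * x + (m + 1 + 1) * a ^ 2) := by ring

theorem one_sub_pow_succ_le {a x : K} (ha : 0 ≤ a) (hx0 : 0 < x) (hx : x ≤ 1) {m : ℕ}
    (ham : (m + 2) * a ≤ 1) :
    (1 - x) ^ (m + 1) ≤ (1 - a) ^ m * (1 - (m + 2) * a + (m + 1) * a ^ 2 * x⁻¹) := by
  refine le_of_mul_le_mul_left ((mul_one_sub_pow_succ_le_tangent ha hx ham).trans_eq ?_) hx0
  field_simp

theorem sum_card_sub_pow_le {ι : Type*} {T : Finset ι} {w : ι → K} {P : K} {m : ℕ}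
    (hP : m + 1 ≤ P) (hw_pos : ∀ i ∈ T, 0 < w i) (hw_le : ∀ i ∈ T, w i ≤ #T)
    (hw_sum : ∑ i ∈ T, (w i)⁻¹ ≤ P) :
    ∑ i ∈ T, (#T - w i) ^ m ≤ (#T : K) ^ (m + 1) * (1 - P⁻¹) ^ m := by
  obtain _ | m := m
  · simp
  obtain rfl | hT := T.eq_empty_or_nonempty
  · simp
  push_cast at hP
  set t : K := (#T : K)
  set a : K := P⁻¹
  have ht : 0 < t := Nat.cast_pos.2 hT.card_pos
  have hP0 : 0 < P := by linarith [Nat.cast_nonneg (α := K) m]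
  have ha : 0 < a := inv_pos.2 hP0
  have haP : a * P = 1 := inv_mul_cancel₀ hP0.ne'
  have ham : (m + 2) * a ≤ 1 := by nlinarith
  have hterm (i) (hi : i ∈ T) : (t - w i) ^ (m + 1) ≤
      t ^ (m + 1) * ((1 - a) ^ m * (1 - (m + 2) * a + (m + 1) * a ^ 2 * (t * (w i)⁻¹))) := by
    have hwi := hw_pos i hi
    have h := one_sub_pow_succ_le ha.le (div_pos hwi ht) ((div_le_one ht).2 (hw_le i hi)) ham
    rw [inv_div, div_eq_mul_inv t] at h
    calc (t - w i) ^ (m + 1) = t ^ (m + 1) * (1 - w i / t) ^ (m + 1) := by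
          rw [← mul_pow, mul_sub, mul_one, mul_div_cancel₀ _ ht.ne']
      _ ≤ _ := mul_le_mul_of_nonneg_left h (by positivity)
  have ha1 : 0 ≤ 1 - a := by nlinarith [mul_nonneg (Nat.cast_nonneg (α := K) m) ha.le]
  calc ∑ i ∈ T, (t - w i) ^ (m + 1)
      ≤ ∑ i ∈ T, t ^ (m + 1) *
          ((1 - a) ^ m * (1 - (m + 2) * a + (m + 1) * a ^ 2 * (t * (w i)⁻¹))) :=
        sum_le_sum hterm
    _ = t ^ (m + 1) * ((1 - a) ^ m *
          (t * (1 - (m + 2) * a) + (m + 1) * a ^ 2 * (t * ∑ i ∈ T, (w i)⁻¹))) := by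
        simp only [← mul_sum, sum_add_distrib, sum_const, nsmul_eq_mul, t]
    _ ≤ t ^ (m + 1) * ((1 - a) ^ m * (t * (1 - (m + 2) * a) + (m + 1) * a ^ 2 * (t * P))) := by
        gcongr
    _ = t ^ (m + 1 + 1) * (1 - a) ^ (m + 1) := by
        linear_combination t ^ (m + 2) * (1 - a) ^ m * (m + 1) * a * haP

end ScalarInequality

section Fibers

open Classical in
theorem sum_inv_card_fiber {α β K : Type*} [Field K] [CharZero K] (s : Finset α) (f : α → β) :
    ∑ x ∈ s, (#{y ∈ s | f y = f x} : K)⁻¹ = #(s.image f) := by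
  rw [sum_comp (fun b ↦ (#{y ∈ s | f y = b} : K)⁻¹) f, card_eq_sum_ones, Nat.cast_sum]
  refine sum_congr rfl fun b hb ↦ ?_
  have hne : #{y ∈ s | f y = b} ≠ 0 := by
    obtain ⟨x, hx, rfl⟩ := mem_image.1 hb
    exact card_ne_zero_of_mem (mem_filter.2 ⟨hx, rfl⟩)
  rw [nsmul_eq_mul, mul_inv_cancel₀ (Nat.cast_ne_zero.2 hne), Nat.cast_one]

open Classical in
theorem card_filter_comp_eq {α β κ : Type*} [Fintype α] [Fintype β] [Fintype κ]
    [DecidableEq κ] (f : α → β) (p : (κ → β) → Prop) {n : ℕ}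
    (hn : ∀ y, p y → ∀ k, #{a | f a = y k} = n) :
    #{x : κ → α | p (f ∘ x)} = n ^ Fintype.card κ * #{y | p y} := by
  have hmaps : ∀ x ∈ ({x : κ → α | p (f ∘ x)} : Finset _), f ∘ x ∈ ({y | p y} : Finset _) := by
    simp
  rw [card_eq_sum_card_fiberwise hmaps, mul_comm, ← smul_eq_mul, ← sum_const]
  refine sum_congr rfl fun y hy ↦ ?_
  replace hy : p y := (mem_filter.1 hy).2
  have hfiber : ({x ∈ ({x : κ → α | p (f ∘ x)} : Finset _) | f ∘ x = y} : Finset (κ → α)) =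
      Fintype.piFinset fun k ↦ {a | f a = y k} := by
    ext x
    simp only [mem_filter, mem_univ, true_and, Fintype.mem_piFinset]
    exact ⟨fun h k ↦ congrFun h.2 k, fun h ↦ have hxy : f ∘ x = y := funext h; ⟨hxy ▸ hy, hxy⟩⟩
  rw [hfiber, Fintype.card_piFinset, prod_congr rfl fun k _ ↦ hn y hy k, prod_const, card_univ]

open Classical in
theorem card_injective_image_eq {ι : Type*} (S : Finset ι) [Fintype ι] :
    #{x : Fin #S → ι | x.Injective ∧ univ.image x = S} = (#S).factorial := by
  have hcard : Fintype.card (Fin #S ↪ S) = (#S).factorial := by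
    rw [Fintype.card_embedding_eq, Fintype.card_fin, Fintype.card_coe, Nat.descFactorial_self]
  rw [← hcard, ← card_univ]
  symm
  refine card_bij (fun e _ i ↦ (e i : ι)) (fun e _ ↦ ?_)
    (fun e _ e' _ h ↦ by ext i; exact congrFun h i) (fun x hx ↦ ?_)
  · have hinj : Function.Injective fun i ↦ (e i : ι) := Subtype.val_injective.comp e.injective
    refine mem_filter.2 ⟨mem_univ _, hinj, eq_of_subset_of_card_le ?_ ?_⟩
    · exact image_subset_iff.2 fun i _ ↦ (e i).2
    · rw [card_image_of_injective _ hinj, card_univ, Fintype.card_fin]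
  · obtain ⟨hinj, himage⟩ := (mem_filter.1 hx).2
    have hmem (i) : x i ∈ S := himage ▸ mem_image_of_mem x (mem_univ i)
    exact ⟨⟨fun i ↦ ⟨x i, hmem i⟩, fun i j h ↦ hinj (congrArg Subtype.val h)⟩, mem_univ _, rfl⟩

end Fibers

section IndepTuples

variable {ι F V : Type*} [Field F] [AddCommGroup V] [Module F V]

theorem linearIndependent_map_comp_iff {V' : Type*} [AddCommGroup V'] [Module F V'] (f : V →ₗ[F] V')
    {y : ι → V} :
    LinearIndependent F (f ∘ y) ↔
      LinearIndependent F y ∧ Disjoint (span F (Set.range y)) (LinearMap.ker f) :=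
  ⟨fun h ↦ ⟨h.of_comp, Submodule.range_ker_disjoint h⟩, fun h ↦ h.1.map h.2⟩

theorem linearIndependent_finCons_iff_mkQ {m : ℕ} {a : V} (ha : a ≠ 0) {y : Fin m → V} :
    LinearIndependent F (Fin.cons a y : Fin (m + 1) → V) ↔
      LinearIndependent F ((span F {a}).mkQ ∘ y) := by
  rw [linearIndependent_map_comp_iff, ker_mkQ, disjoint_span_singleton' ha,
    linearIndependent_finCons]

variable [Fintype ι]

open Classical in
/-- The ordered `m`-tuples of indices at which the family `v` takes linearly independent values. -/
noncomputable def indepTuples (F : Type*) [Field F] [Module F V] (v : ι → V) (m : ℕ) :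
    Finset (Fin m → ι) :=
  {x | LinearIndependent F (v ∘ x)}

open Classical in
/-- The indices of the nonzero members of the family `v` that lie in the subspace `W`. For a line
`W`, their number is the multiplicity of the corresponding projective point in the family. -/
noncomputable def nonzeroIn (v : ι → V) (W : Submodule F V) : Finset ι :=
  {j | v j ≠ 0 ∧ v j ∈ W}

theorem mem_indepTuples {v : ι → V} {m : ℕ} {x : Fin m → ι} :
    x ∈ indepTuples F v m ↔ LinearIndependent F (v ∘ x) := by
  simp [indepTuples]

theorem mem_nonzeroIn {v : ι → V} {W : Submodule F V} {j : ι} :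
    j ∈ nonzeroIn v W ↔ v j ≠ 0 ∧ v j ∈ W := by
  simp [nonzeroIn]

theorem card_indepTuples_succ (v : ι → V) (m : ℕ) :
    #(indepTuples F v (m + 1)) =
      ∑ i ∈ nonzeroIn v (⊤ : Submodule F V), #(indepTuples F ((span F {v i}).mkQ ∘ v) m) := by
  classical
  have hcons (i : ι) (x : Fin m → ι) :
      v ∘ (Fin.cons i x : Fin (m + 1) → ι) = Fin.cons (v i) (v ∘ x) := by
    ext j
    cases j using Fin.cases <;> rfl
  have hterm (i : ι) : (∑ x : Fin m → ι,
      if LinearIndependent F (v ∘ (Fin.cons i x : Fin (m + 1) → ι)) then 1 else 0) =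
      if i ∈ nonzeroIn v (⊤ : Submodule F V) then
        #(indepTuples F ((span F {v i}).mkQ ∘ v) m) else 0 := by
    simp only [hcons, mem_nonzeroIn, mem_top, and_true]
    split_ifs with hi
    · simp only [linearIndependent_finCons_iff_mkQ hi, indepTuples, card_filter,
        Function.comp_assoc]
    · rw [not_not] at hi
      exact sum_eq_zero fun x _ ↦ if_neg fun h ↦ h.ne_zero 0 hi
  calc #(indepTuples F v (m + 1))
      = ∑ i, ∑ x : Fin m → ι,
          if LinearIndependent F (v ∘ (Fin.cons i x : Fin (m + 1) → ι)) then 1 else 0 := by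
        rw [indepTuples, card_filter, ← (Fin.consEquiv fun _ ↦ ι).sum_comp, Fintype.sum_prod_type]
        rfl
    _ = _ := by rw [sum_congr rfl fun i _ ↦ hterm i, sum_ite_mem, univ_inter]

theorem card_nonzeroIn_top_mkQ (v : ι → V) (L : Submodule F V) :
    #(nonzeroIn (L.mkQ ∘ v) (⊤ : Submodule F (V ⧸ L))) + #(nonzeroIn v L) =
      #(nonzeroIn v (⊤ : Submodule F V)) := by
  classical
  rw [← card_union_of_disjoint]
  · congr 1
    ext j
    simp only [mem_union, mem_nonzeroIn, Function.comp_apply, mkQ_apply, ne_eq, mem_top, and_true,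
      Quotient.mk_eq_zero]
    exact ⟨fun h ↦ h.elim (fun h h0 ↦ h (h0 ▸ L.zero_mem)) And.left, fun h ↦ by tauto⟩
  · simp only [disjoint_left, mem_nonzeroIn, Function.comp_apply, mkQ_apply, ne_eq,
      Quotient.mk_eq_zero]
    tauto

open Classical in
theorem card_units_smul_eq [Fintype F] (v : ι → V) {u : V} (hu : u ≠ 0) :
    #{p : ι × Fˣ | p.2 • v p.1 = u} = #(nonzeroIn v (span F {u})) := by
  refine card_nbij Prod.fst ?_ ?_ ?_
  · rintro ⟨j, c⟩ h
    obtain rfl : c • v j = u := by simpa using h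
    exact mem_nonzeroIn.2 ⟨fun h0 ↦ hu (by simp [h0]),
      mem_span_singleton.2 ⟨(c⁻¹ : Fˣ), inv_smul_smul c (v j)⟩⟩
  · rintro ⟨j, c⟩ hc ⟨_, c'⟩ hc' rfl
    have hc : c • v j = u := by simpa using hc
    have hc' : c' • v j = u := by simpa using hc'
    have hj : v j ≠ 0 := fun h0 ↦ hu (by rw [← hc, h0, smul_zero])
    exact Prod.ext rfl (Units.ext (smul_left_injective F hj (hc.trans hc'.symm)))
  · intro j hj
    obtain ⟨hj0, hj⟩ := mem_nonzeroIn.1 (mem_coe.1 hj)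
    obtain ⟨a, ha⟩ := mem_span_singleton.1 hj
    have ha0 : a ≠ 0 := by rintro rfl; exact hj0 (by rw [← ha, zero_smul])
    refine ⟨(j, (Units.mk0 a ha0)⁻¹), ?_, rfl⟩
    simp [← ha, Units.smul_def, ha0]

variable [Fintype F]

theorem sum_inv_card_nonzeroIn_le [FiniteDimensional F V] (v : ι → V) :
    ((Fintype.card F : ℚ) - 1) *
        ∑ i ∈ nonzeroIn v (⊤ : Submodule F V), (#(nonzeroIn v (span F {v i})) : ℚ)⁻¹ ≤
      (Fintype.card F : ℚ) ^ finrank F V - 1 := by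
  classical
  have := Module.finite_of_finite F (M := V)
  have := Fintype.ofFinite V
  let S : Finset (ι × Fˣ) := nonzeroIn v (⊤ : Submodule F V) ×ˢ univ
  let f (p : ι × Fˣ) : V := p.2 • v p.1
  have hf {p : ι × Fˣ} : p ∈ S ↔ f p ≠ 0 := by
    simp [S, f, mem_nonzeroIn, Units.smul_def]
  have hfiber (p) (hp : p ∈ S) :
      (#{p' ∈ S | f p' = f p} : ℚ)⁻¹ = (#(nonzeroIn v (span F {v p.1})) : ℚ)⁻¹ := by
    have hS : {p' ∈ S | f p' = f p} = ({p' | f p' = f p} : Finset (ι × Fˣ)) := by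
      ext p'
      simp only [mem_filter, mem_univ, true_and, and_iff_right_iff_imp]
      exact fun h ↦ hf.2 (h ▸ hf.1 hp)
    rw [hS, card_units_smul_eq v (hf.1 hp), span_singleton_group_smul_eq]
  calc _ = ∑ p ∈ S, (#{p' ∈ S | f p' = f p} : ℚ)⁻¹ := by
        rw [sum_congr rfl hfiber, sum_product]
        simp only [sum_const, card_univ, nsmul_eq_mul, ← mul_sum]
        rw [Fintype.card_units, Nat.cast_pred Fintype.card_pos]
    _ = #(S.image f) := sum_inv_card_fiber S f
    _ ≤ #((univ : Finset V).erase 0) := by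
        gcongr
        exact image_subset_iff.2 fun p hp ↦ mem_erase.2 ⟨hf.1 hp, mem_univ _⟩
    _ = _ := by
        rw [cast_card_erase_of_mem (mem_univ _), card_univ, Module.card_eq_pow_finrank (K := F),
          Nat.cast_pow]

end IndepTuples

section IndepDensity

/-- For a prime power `q`, the probability that `m` independent uniformly random nonzero vectors of
`𝔽_q ^ d` are linearly independent. -/
def indepDensity (q : ℚ) (d m : ℕ) : ℚ :=
  ∏ i ∈ range m, (q ^ d - q ^ i) / (q ^ d - 1)

theorem indepDensity_nonneg {q : ℚ} (hq : 1 ≤ q) {d m : ℕ} (hm : m ≤ d) :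
    0 ≤ indepDensity q d m :=
  prod_nonneg fun _ hi ↦ div_nonneg
    (sub_nonneg.2 (pow_le_pow_right₀ hq ((mem_range.1 hi).le.trans hm)))
    (sub_nonneg.2 (one_le_pow₀ hq))

theorem indepDensity_succ_succ {q : ℚ} (hq : 1 < q) {d m : ℕ} (hm : m ≤ d) :
    indepDensity q (d + 1) (m + 1) =
      indepDensity q d m * ((q ^ (d + 1) - q) / (q ^ (d + 1) - 1)) ^ m := by
  have hd : q ^ (d + 1) - 1 ≠ 0 := (sub_pos.2 (one_lt_pow₀ hq d.succ_ne_zero)).ne'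
  rw [indepDensity, indepDensity, prod_range_succ', pow_zero, div_self hd, mul_one,
    ← card_range m, ← prod_const, card_range, ← prod_mul_distrib]
  refine prod_congr rfl fun i hi ↦ ?_
  have hd' : q ^ d - 1 ≠ 0 :=
    (sub_pos.2 (one_lt_pow₀ hq (Nat.ne_zero_of_lt ((mem_range.1 hi).trans_le hm)))).ne'
  rw [div_mul_div_comm, div_eq_div_iff hd (mul_ne_zero hd' hd)]
  ring

theorem indepDensity_mul_pow {q : ℚ} (hq : 1 < q) {d m : ℕ} (hm : m ≤ d) :
    indepDensity q d m * (q ^ d - 1) ^ m = ∏ i ∈ range m, (q ^ d - q ^ i) := by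
  rw [indepDensity, ← card_range m, ← prod_const, card_range, ← prod_mul_distrib]
  refine prod_congr rfl fun i hi ↦ div_mul_cancel₀ _ (sub_pos.2 (one_lt_pow₀ hq ?_)).ne'
  exact Nat.ne_zero_of_lt ((mem_range.1 hi).trans_le hm)

theorem natCast_le_pow_sub_one_div {q : ℚ} (hq : 1 < q) (d : ℕ) :
    (d : ℚ) ≤ (q ^ d - 1) / (q - 1) := by
  rw [le_div_iff₀ (sub_pos.2 hq)]
  linarith [one_add_mul_sub_le_pow (by linarith : -1 ≤ q) d]

end IndepDensity

section Counting

variable {ι F V : Type*} [Fintype ι] [Field F] [Fintype F] [AddCommGroup V] [Module F V]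

theorem sum_card_sub_card_nonzeroIn_pow_le [FiniteDimensional F V] (v : ι → V) {m : ℕ}
    (hm : m < finrank F V) :
    ∑ i ∈ nonzeroIn v (⊤ : Submodule F V),
        ((#(nonzeroIn v (⊤ : Submodule F V)) : ℚ) - #(nonzeroIn v (span F {v i}))) ^ m ≤
      (#(nonzeroIn v (⊤ : Submodule F V)) : ℚ) ^ (m + 1) *
        (((Fintype.card F : ℚ) ^ finrank F V - Fintype.card F) /
          ((Fintype.card F : ℚ) ^ finrank F V - 1)) ^ m := by
  have hq : (1 : ℚ) < Fintype.card F := Nat.one_lt_cast.2 Fintype.one_lt_card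
  set q : ℚ := (Fintype.card F : ℚ)
  set d := finrank F V
  have hpoints : (m : ℚ) + 1 ≤ (q ^ d - 1) / (q - 1) :=
    le_trans (by exact_mod_cast hm) (natCast_le_pow_sub_one_div hq d)
  have hcompl : 1 - ((q ^ d - 1) / (q - 1))⁻¹ = (q ^ d - q) / (q ^ d - 1) := by
    rw [inv_div, one_sub_div (sub_pos.2 (one_lt_pow₀ hq (Nat.ne_zero_of_lt hm))).ne',
      sub_sub_sub_cancel_right]
  rw [← hcompl]
  refine sum_card_sub_pow_le hpoints (fun i hi ↦ ?_) (fun i _ ↦ ?_) ?_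
  · exact Nat.cast_pos.2 (card_pos.2
      ⟨i, mem_nonzeroIn.2 ⟨(mem_nonzeroIn.1 hi).1, mem_span_singleton_self _⟩⟩)
  · exact Nat.cast_le.2 (card_le_card fun _ hj ↦ mem_nonzeroIn.2 ⟨(mem_nonzeroIn.1 hj).1, mem_top⟩)
  · rw [le_div_iff₀' (sub_pos.2 hq)]
    exact sum_inv_card_nonzeroIn_le v

theorem card_indepTuples_le [FiniteDimensional F V] (v : ι → V) {m : ℕ} (hm : m ≤ finrank F V) :
    (#(indepTuples F v m) : ℚ) ≤ indepDensity (Fintype.card F) (finrank F V) m *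
      (#(nonzeroIn v (⊤ : Submodule F V)) : ℚ) ^ m := by
  induction m generalizing V with
  | zero => simp [indepTuples, indepDensity]
  | succ m ih =>
    obtain ⟨d, hd⟩ : ∃ d, finrank F V = d + 1 := ⟨finrank F V - 1, by omega⟩
    have hmd : m ≤ d := by omega
    have hq : (1 : ℚ) < Fintype.card F := Nat.one_lt_cast.2 Fintype.one_lt_card
    have hsum := sum_card_sub_card_nonzeroIn_pow_le v hm
    rw [hd] at hsum ⊢
    set q : ℚ := (Fintype.card F : ℚ)
    set T := nonzeroIn v (⊤ : Submodule F V)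
    have hquot (i) (hi : i ∈ T) : (#(indepTuples F ((span F {v i}).mkQ ∘ v) m) : ℚ) ≤
        indepDensity q d m * ((#T : ℚ) - #(nonzeroIn v (span F {v i}))) ^ m := by
      have hfinrank : finrank F (V ⧸ span F {v i}) = d := by
        have hadd := (span F {v i}).finrank_quotient_add_finrank
        rw [finrank_span_singleton (mem_nonzeroIn.1 hi).1, hd] at hadd
        exact Nat.add_right_cancel hadd
      have hcard : (#T : ℚ) - #(nonzeroIn v (span F {v i})) =
          #(nonzeroIn ((span F {v i}).mkQ ∘ v) (⊤ : Submodule F (V ⧸ span F {v i}))) := by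
        rw [← card_nonzeroIn_top_mkQ v (span F {v i}), Nat.cast_add, add_sub_cancel_right]
      simpa only [hfinrank, hcard] using ih ((span F {v i}).mkQ ∘ v) (hfinrank ▸ hmd)
    calc (#(indepTuples F v (m + 1)) : ℚ)
        = ∑ i ∈ T, (#(indepTuples F ((span F {v i}).mkQ ∘ v) m) : ℚ) := by
          rw [card_indepTuples_succ (F := F), Nat.cast_sum]
      _ ≤ ∑ i ∈ T, indepDensity q d m * ((#T : ℚ) - #(nonzeroIn v (span F {v i}))) ^ m :=
          sum_le_sum hquot
      _ ≤ indepDensity q d m *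
            ((#T : ℚ) ^ (m + 1) * ((q ^ (d + 1) - q) / (q ^ (d + 1) - 1)) ^ m) := by
          rw [← mul_sum]
          exact mul_le_mul_of_nonneg_left hsum (indepDensity_nonneg hq.le hmd)
      _ = indepDensity q (d + 1) (m + 1) * (#T : ℚ) ^ (m + 1) := by
          rw [indepDensity_succ_succ hq hmd]
          ring

theorem card_indepTuples_id {m : ℕ} [Fintype V] (hm : m ≤ finrank F V) :
    #(indepTuples F (id : V → V) m) =
      ∏ i ∈ range m, (Fintype.card F ^ finrank F V - Fintype.card F ^ i) := by
  rw [← Fin.prod_univ_eq_prod_range (fun i ↦ Fintype.card F ^ finrank F V - Fintype.card F ^ i),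
    ← card_linearIndependent hm, Nat.subtype_card]
  exact fun x ↦ mem_indepTuples

open Classical in
/- Scaling the family by all units covers every nonzero vector exactly `n` times. -/
theorem pow_mul_card_indepTuples_of_card_nonzeroIn {v : ι → V} {n m : ℕ} [Fintype V]
    (hv : ∀ L : Submodule F V, finrank F L = 1 → #(nonzeroIn v L) = n) :
    (Fintype.card F - 1) ^ m * #(indepTuples F v m) =
      n ^ m * #(indepTuples F (id : V → V) m) := by
  let f (p : ι × Fˣ) : V := p.2 • v p.1
  have hf (x : Fin m → ι × Fˣ) :
      LinearIndependent F (v ∘ (Prod.fst ∘ x)) ↔ LinearIndependent F (f ∘ x) :=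
    (LinearIndependent.units_smul_iff (v ∘ (Prod.fst ∘ x)) (Prod.snd ∘ x)).symm
  have hfst (i : ι) : #{p : ι × Fˣ | p.1 = i} = Fintype.card F - 1 := by
    have hprod : ({p | p.1 = i} : Finset (ι × Fˣ)) = {i} ×ˢ univ := by
      ext ⟨j, c⟩
      simp [eq_comm]
    rw [hprod, card_product, card_singleton, one_mul, card_univ, Fintype.card_units]
  have hscale := card_filter_comp_eq (Prod.fst : ι × Fˣ → ι)
    (fun y : Fin m → ι ↦ LinearIndependent F (v ∘ y)) fun y _ k ↦ hfst (y k)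
  have hvector := card_filter_comp_eq f (fun y : Fin m → V ↦ LinearIndependent F y)
    fun y hy k ↦ (card_units_smul_eq v (hy.ne_zero k)).trans
      (hv _ (finrank_span_singleton (hy.ne_zero k)))
  simp only [hf, Fintype.card_fin] at hscale hvector
  simpa only [indepTuples, Function.id_comp] using hscale.symm.trans hvector

variable [FiniteDimensional F V]

theorem card_indepTuples_eq {v : ι → V} {n m : ℕ}
    (hcard : Fintype.card ι * (Fintype.card F - 1) = n * (Fintype.card F ^ finrank F V - 1))
    (hv : ∀ L : Submodule F V, finrank F L = 1 → #(nonzeroIn v L) = n) (hm : m ≤ finrank F V) :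
    (#(indepTuples F v m) : ℚ) =
      indepDensity (Fintype.card F) (finrank F V) m * (Fintype.card ι : ℚ) ^ m := by
  have := Module.finite_of_finite F (M := V)
  have := Fintype.ofFinite V
  have hq : (1 : ℚ) < Fintype.card F := Nat.one_lt_cast.2 Fintype.one_lt_card
  set q : ℚ := (Fintype.card F : ℚ)
  set d := finrank F V
  have hcardQ : (Fintype.card ι : ℚ) * (q - 1) = n * (q ^ d - 1) := by
    have := congrArg (Nat.cast (R := ℚ)) hcard
    rwa [Nat.cast_mul, Nat.cast_mul, Nat.cast_pred Fintype.card_pos,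
      Nat.cast_pred (pow_pos Fintype.card_pos d), Nat.cast_pow] at this
  have hcount : (q - 1) ^ m * #(indepTuples F v m) = n ^ m * ∏ i ∈ range m, (q ^ d - q ^ i) := by
    have := congrArg (Nat.cast (R := ℚ)) (pow_mul_card_indepTuples_of_card_nonzeroIn (m := m) hv)
    rw [card_indepTuples_id hm, Nat.cast_mul, Nat.cast_mul, Nat.cast_pow, Nat.cast_pow,
      Nat.cast_pred Fintype.card_pos, Nat.cast_prod] at this
    rw [this]
    congr 1
    refine prod_congr rfl fun i hi ↦ ?_
    rw [Nat.cast_sub (Nat.pow_le_pow_right Fintype.card_pos ((mem_range.1 hi).le.trans hm)),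
      Nat.cast_pow, Nat.cast_pow]
  refine mul_left_cancel₀ (pow_ne_zero m (sub_pos.2 hq).ne') ?_
  calc (q - 1) ^ m * #(indepTuples F v m)
      = n ^ m * (indepDensity q d m * (q ^ d - 1) ^ m) := by rw [hcount, indepDensity_mul_pow hq hm]
    _ = indepDensity q d m * (n * (q ^ d - 1)) ^ m := by rw [mul_pow]; ring
    _ = (q - 1) ^ m * (indepDensity q d m * (Fintype.card ι : ℚ) ^ m) := by
        rw [← hcardQ, mul_pow]; ring

theorem card_indepTuples_le_card_indepTuples {v : ι → V} {n : ℕ}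
    (hcard : Fintype.card ι * (Fintype.card F - 1) = n * (Fintype.card F ^ finrank F V - 1))
    (hv : ∀ L : Submodule F V, finrank F L = 1 → #(nonzeroIn v L) = n) (u : ι → V) (m : ℕ) :
    #(indepTuples F u m) ≤ #(indepTuples F v m) := by
  obtain hm | hm := le_or_gt m (finrank F V)
  · have hq : (1 : ℚ) ≤ Fintype.card F := Nat.one_le_cast.2 Fintype.card_pos
    rw [← Nat.cast_le (α := ℚ), card_indepTuples_eq hcard hv hm]
    refine (card_indepTuples_le u hm).trans ?_
    gcongr
    · exact indepDensity_nonneg hq hm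
    · exact card_le_univ _
  · have hempty : indepTuples F u m = ∅ := eq_empty_of_forall_notMem fun x hx ↦ hm.not_ge <| by
      simpa using (mem_indepTuples.1 hx).fintype_card_le_finrank
    rw [hempty, card_empty]
    exact Nat.zero_le _

end Counting

section Dependence

variable {ι F V : Type*} [Fintype ι] [Field F] [AddCommGroup V] [Module F V]

open Classical in
/-- The `m`-element sets of indices on which the family `v` is linearly independent. -/
noncomputable def indepSets (F : Type*) [Field F] [Module F V] (v : ι → V) (m : ℕ) :
    Finset (Finset ι) :=
  (powersetCard m univ).filter fun S ↦ LinearIndepOn F v (S : Set ι)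

theorem mem_indepSets {v : ι → V} {m : ℕ} {S : Finset ι} :
    S ∈ indepSets F v m ↔ #S = m ∧ LinearIndepOn F v (S : Set ι) := by
  simp [indepSets]

open Classical in
theorem card_indepTuples_eq_factorial_mul (v : ι → V) (m : ℕ) :
    #(indepTuples F v m) = m.factorial * #(indepSets F v m) := by
  have himage {x : Fin m → ι} (hx : x.Injective) :
      LinearIndependent F (v ∘ x) ↔ LinearIndepOn F v (univ.image x : Finset ι) := by
    rw [coe_image, coe_univ, Set.image_univ, linearIndepOn_range_iff hx]
  have hmaps : ∀ x ∈ indepTuples F v m, univ.image x ∈ indepSets F v m := by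
    intro x hx
    have hinj : x.Injective := (mem_indepTuples.1 hx).injective.of_comp
    exact mem_indepSets.2 ⟨by rw [card_image_of_injective _ hinj, card_univ, Fintype.card_fin],
      (himage hinj).1 (mem_indepTuples.1 hx)⟩
  rw [card_eq_sum_card_fiberwise hmaps, mul_comm, ← smul_eq_mul, ← sum_const]
  refine sum_congr rfl fun S hS ↦ ?_
  obtain ⟨rfl, hSv⟩ := mem_indepSets.1 hS
  rw [← card_injective_image_eq S]
  congr 1
  ext x
  simp only [mem_filter, mem_indepTuples, mem_univ, true_and, and_congr_left_iff]
  exact fun hx ↦ ⟨fun h ↦ h.injective.of_comp, fun h ↦ (himage h).2 (by rwa [hx])⟩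

open Classical in
/-- The proportion of linearly dependent sets among the `m`-element sets of members of the family
`v`, taken with multiplicity. The `k`-dependence of an `r × s` matrix is the case of its columns
with `m = r - k`. -/
noncomputable def dependence (F : Type*) [Field F] [Module F V] (v : ι → V) (m : ℕ) : ℚ :=
  #((powersetCard m univ).filter fun S : Finset ι ↦ ¬ LinearIndepOn F v (S : Set ι)) /
    (Fintype.card ι).choose m

theorem matKDep_eq_dependence {F : Type} [Field F] {r s : ℕ} (M : Matrix (Fin r) (Fin s) F)
    (m : ℕ) : matKDep M m = dependence F M.transpose m := by
  simp only [dependence, Fintype.card_fin]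
  rfl

open Classical in
theorem dependence_le_dependence {u v : ι → V} {m : ℕ}
    (h : #(indepTuples F u m) ≤ #(indepTuples F v m)) : dependence F v m ≤ dependence F u m := by
  rw [card_indepTuples_eq_factorial_mul, card_indepTuples_eq_factorial_mul,
    mul_le_mul_iff_right₀ m.factorial_pos] at h
  have hcompl (y : ι → V) : #(indepSets F y m) +
      #((powersetCard m univ).filter fun S : Finset ι ↦ ¬ LinearIndepOn F y (S : Set ι)) =
        #(powersetCard m (univ : Finset ι)) :=
    card_filter_add_card_filter_not _
  have hu := hcompl u
  have hv := hcompl v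
  exact div_le_div_of_nonneg_right (Nat.cast_le.2 (by omega)) (Nat.cast_nonneg _)

end Dependence

open Classical in
theorem stmt6_general {ι F V : Type*} [Fintype ι] [Field F] [Fintype F] [AddCommGroup V]
    [Module F V] [FiniteDimensional F V] {n : ℕ} {v : ι → V}
    (hcard : Fintype.card ι * (Fintype.card F - 1) = n * (Fintype.card F ^ finrank F V - 1))
    (hv : ∀ L : Submodule F V, finrank F L = 1 → #{j | v j ≠ 0 ∧ v j ∈ L} = n)
    (u : ι → V) (m : ℕ) : dependence F v m ≤ dependence F u m :=
  dependence_le_dependence (card_indepTuples_le_card_indepTuples hcard hv u m)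

open Classical in
theorem stmt6 (q : ℕ) (hq : IsPrimePow q) (F : Type) [Field F] [Fintype F]
    (hF : Fintype.card F = q) (r n s : ℕ) (hr : 1 ≤ r) (hn : 1 ≤ n)
    (hs : s * (q - 1) = n * (q ^ r - 1))
    (N : Matrix (Fin r) (Fin s) F)
    (hN : ∀ L : Submodule F (Fin r → F), Module.finrank F L = 1 →
      (Finset.univ.filter
        (fun j : Fin s => N.transpose j ≠ 0 ∧ N.transpose j ∈ L)).card = n) :
    ∀ k : ℕ, k ≤ r → 1 ≤ r - k → r - k ≤ s →
      ∀ M : Matrix (Fin r) (Fin s) F, M.rank = r →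
        matKDep N (r - k) ≤ matKDep M (r - k) := by
  subst hF
  intro k _ _ _ M _
  simpa only [matKDep_eq_dependence] using
    stmt6_general (by simpa using hs) hN M.transpose (r - k)
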